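/- The system of vector-valued functions { (1/√(2π))·(1, −i)ᵀ e^{i(2n)x}, (1/√(2π))·(1, i)ᵀ e^{−i(2n)x} : n ∈ ℤ } is an orthonormal basis of L²([0,π], ℂ²). -/

import Mathlib

open MeasureTheory

/-- The eigenfunction `(1/√(2π)) (1, ∓i)ᵀ e^{±2inx}` of the free Dirac operator, with the upper
signs for `j = false` and the lower ones for `j = true`. -/
noncomputable def diracMode (n : ℤ) (j : Bool) (x : ℝ) : EuclideanSpace ℂ (Fin 2) :=
  ((Real.sqrt (2 * Real.pi) : ℂ))⁻¹ •
    (WithLp.equiv 2 (Fin 2 → ℂ)).symm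
      ![Complex.exp ((if j then -1 else 1) * Complex.I * (2 * (n : ℂ)) * (x : ℂ)),
        (if j then Complex.I else -Complex.I) *
          Complex.exp ((if j then -1 else 1) * Complex.I * (2 * (n : ℂ)) * (x : ℂ))]

theorem continuous_diracMode (n : ℤ) (j : Bool) : Continuous (diracMode n j) := by
  unfold diracMode
  refine ((PiLp.continuous_toLp 2 fun _ : Fin 2 => ℂ).comp
    (continuous_pi fun i => ?_)).const_smul ((Real.sqrt (2 * Real.pi) : ℂ))⁻¹
  cases j <;> fin_cases i <;> simp <;> fun_prop

theorem memLp_diracMode (n : ℤ) (j : Bool) :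
    MemLp (diracMode n j) 2 (volume.restrict (Set.Icc (0 : ℝ) Real.pi)) := by
  obtain ⟨C, hC⟩ := isCompact_Icc.exists_bound_of_continuousOn
    (continuous_diracMode n j).continuousOn
  exact MemLp.of_bound (continuous_diracMode n j).aestronglyMeasurable C
    (ae_restrict_of_forall_mem measurableSet_Icc hC)

theorem inner_diracMode_left (n : ℤ) (j : Bool) (x : ℝ) (y : EuclideanSpace ℂ (Fin 2)) :
    inner ℂ (diracMode n j x) y =
      ((Real.sqrt (2 * Real.pi) : ℂ))⁻¹ *
        (Complex.exp (-((if j then -1 else 1) * Complex.I * (2 * (n : ℂ)) * (x : ℂ))) *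
          (y 0 + (if j then -Complex.I else Complex.I) * y 1)) := by
  have h2 : (starRingEnd ℂ) 2 = 2 := Complex.conj_ofNat 2
  cases j <;> simp [diracMode, PiLp.inner_apply, Fin.sum_univ_two, ← Complex.exp_conj, h2] <;> ring

theorem inner_diracMode_diracMode (n m : ℤ) (j k : Bool) (x : ℝ) :
    inner ℂ (diracMode n j x) (diracMode m k x) =
      if j = k then (Real.pi : ℂ)⁻¹ *
        Complex.exp (((if j then -1 else 1) * Complex.I * (2 * ((m - n : ℤ) : ℂ))) * x)
      else 0 := by
  have hc : ((Real.sqrt (2 * Real.pi) : ℂ))⁻¹ * ((Real.sqrt (2 * Real.pi) : ℂ))⁻¹ =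
      (2 * (Real.pi : ℂ))⁻¹ := by
    rw [← mul_inv, ← Complex.ofReal_mul, Real.mul_self_sqrt (by positivity)]
    push_cast; rfl
  have hexp (s : ℂ) : Complex.exp (s * Complex.I * (2 * ((m - n : ℤ) : ℂ)) * x) =
      Complex.exp (-(s * Complex.I * (2 * (n : ℂ)) * (x : ℂ))) *
        Complex.exp (s * Complex.I * (2 * (m : ℂ)) * (x : ℂ)) := by
    rw [← Complex.exp_add]; push_cast; ring_nf
  rw [inner_diracMode_left, hexp]
  simp only [diracMode, WithLp.equiv_symm_apply, PiLp.smul_apply, smul_eq_mul,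
    Matrix.cons_val_zero, Matrix.cons_val_one]
  generalize Complex.exp (-((if j then -1 else 1) * Complex.I * (2 * (n : ℂ)) * (x : ℂ))) = a
  rcases eq_or_ne j k with rfl | hjk
  · generalize Complex.exp ((if j then -1 else 1) * Complex.I * (2 * (m : ℂ)) * (x : ℂ)) = b
    generalize ((Real.sqrt (2 * Real.pi) : ℂ))⁻¹ = c at hc ⊢
    cases j <;> simp only [if_true, Bool.false_eq_true, if_false] <;>
      linear_combination 2 * a * b * hc - c ^ 2 * a * b * Complex.I_sq
  · rw [if_neg hjk]
    generalize Complex.exp ((if k then -1 else 1) * Complex.I * (2 * (m : ℂ)) * (x : ℂ)) = b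
    generalize ((Real.sqrt (2 * Real.pi) : ℂ))⁻¹ = c
    cases j <;> cases k <;> simp only [ne_eq, not_true_eq_false, if_true, Bool.false_eq_true,
      if_false] at hjk ⊢ <;>
      linear_combination c ^ 2 * a * b * Complex.I_sq

theorem integral_exp_two_mul_int (l : ℤ) (s : ℂ) (hs : s = 1 ∨ s = -1) :
    ∫ x in (0 : ℝ)..Real.pi, Complex.exp ((s * Complex.I * (2 * (l : ℂ))) * x) =
      if l = 0 then (Real.pi : ℂ) else 0 := by
  split_ifs with hl
  · simp [hl]
  · have hs0 : s ≠ 0 := by rcases hs with rfl | rfl <;> norm_num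
    rw [integral_exp_mul_complex (by simp [hl, hs0])]
    have : Complex.exp (s * Complex.I * (2 * (l : ℂ)) * Real.pi) = 1 := by
      rw [Complex.exp_eq_one_iff]
      rcases hs with rfl | rfl
      · exact ⟨l, by ring⟩
      · exact ⟨-l, by push_cast; ring⟩
    simp [this]

/-- A square-integrable function on `[0, π]` all of whose Fourier coefficients vanish is zero. -/
theorem ae_eq_zero_of_forall_integral_exp_mul_eq_zero {f : ℝ → ℂ}
    (hf : MemLp f 2 (volume.restrict (Set.Icc (0 : ℝ) Real.pi)))
    (h : ∀ n : ℤ, ∫ x in Set.Icc (0 : ℝ) Real.pi,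
      Complex.exp (-(Complex.I * (2 * (n : ℂ)) * (x : ℂ))) * f x = 0) :
    f =ᵐ[volume.restrict (Set.Icc (0 : ℝ) Real.pi)] 0 := by
  rw [← restrict_Ioc_eq_restrict_Icc] at hf ⊢
  have hcoeff (n : ℤ) : fourierCoeffOn Real.pi_pos f n = 0 := by
    rw [fourierCoeffOn_eq_integral, intervalIntegral.integral_of_le Real.pi_pos.le,
      restrict_Ioc_eq_restrict_Icc]
    convert smul_zero _
    rw [← h n]
    refine integral_congr_ae (.of_forall fun x => ?_)
    simp only [fourier_coe_apply, smul_eq_mul]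
    congr 2
    push_cast
    have : (Real.pi : ℂ) ≠ 0 := by exact_mod_cast Real.pi_ne_zero
    field_simp
    ring
  have hsum := tsum_sq_fourierCoeffOn Real.pi_pos hf
  simp only [hcoeff, norm_zero, ne_eq, OfNat.ofNat_ne_zero, not_false_eq_true, zero_pow, tsum_zero,
    smul_eq_mul] at hsum
  have hint : ∫ x in Set.Ioc 0 Real.pi, ‖f x‖ ^ 2 = 0 := by
    rw [intervalIntegral.integral_of_le Real.pi_pos.le] at hsum
    simpa [Real.pi_ne_zero] using hsum.symm
  rw [integral_eq_zero_iff_of_nonneg (fun x => by positivity)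
    (hf.integrable_norm_pow two_ne_zero)] at hint
  filter_upwards [hint] with x hx
  simpa using hx

theorem orthonormal_diracMode :
    Orthonormal ℂ fun p : ℤ × Bool => (memLp_diracMode p.1 p.2).toLp (diracMode p.1 p.2) := by
  rw [orthonormal_iff_ite]
  rintro ⟨n, j⟩ ⟨m, k⟩
  have hinner : inner ℂ ((memLp_diracMode n j).toLp (diracMode n j))
      ((memLp_diracMode m k).toLp (diracMode m k)) =
      ∫ x in Set.Icc (0 : ℝ) Real.pi, inner ℂ (diracMode n j x) (diracMode m k x) := by
    rw [L2.inner_def]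
    refine integral_congr_ae ?_
    filter_upwards [(memLp_diracMode n j).coeFn_toLp, (memLp_diracMode m k).coeFn_toLp]
      with x hn hm
    rw [hn, hm]
  rw [hinner]
  simp_rw [inner_diracMode_diracMode]
  by_cases hjk : j = k
  · simp only [hjk, if_true]
    rw [integral_const_mul, integral_Icc_eq_integral_Ioc,
      ← intervalIntegral.integral_of_le Real.pi_pos.le,
      integral_exp_two_mul_int _ _ (by cases k <;> simp)]
    have : (Real.pi : ℂ) ≠ 0 := by exact_mod_cast Real.pi_ne_zero
    simp [sub_eq_zero, this, eq_comm]
  · simp [hjk]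

theorem orthogonal_span_diracMode_eq_bot :
    (Submodule.span ℂ (Set.range fun p : ℤ × Bool =>
      (memLp_diracMode p.1 p.2).toLp (diracMode p.1 p.2)))ᗮ = ⊥ := by
  rw [Submodule.eq_bot_iff]
  intro f hf
  have hcoord (i : Fin 2) : MemLp (fun x => f x i) 2
      (volume.restrict (Set.Icc (0 : ℝ) Real.pi)) := (Lp.memLp f).eval_piLp i
  have hint (n : ℤ) (j : Bool) : ∫ x in Set.Icc (0 : ℝ) Real.pi,
      Complex.exp (-((if j then -1 else 1) * Complex.I * (2 * (n : ℂ)) * (x : ℂ))) *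
        (f x 0 + (if j then -Complex.I else Complex.I) * f x 1) = 0 := by
    have h := (Submodule.mem_orthogonal _ _).1 hf _ (Submodule.subset_span ⟨(n, j), rfl⟩)
    have hc : ((Real.sqrt (2 * Real.pi) : ℂ))⁻¹ ≠ 0 :=
      inv_ne_zero (Complex.ofReal_ne_zero.2 (by positivity))
    refine (mul_eq_zero.1 ?_).resolve_left hc
    rw [← integral_const_mul, ← h, L2.inner_def]
    refine integral_congr_ae ?_
    filter_upwards [(memLp_diracMode n j).coeFn_toLp] with x hx
    rw [hx, inner_diracMode_left]
  have hadd := ae_eq_zero_of_forall_integral_exp_mul_eq_zero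
    ((hcoord 0).add ((hcoord 1).const_mul Complex.I)) fun n => by simpa using hint n false
  have hsub := ae_eq_zero_of_forall_integral_exp_mul_eq_zero
    ((hcoord 0).add ((hcoord 1).const_mul (-Complex.I))) fun n => by simpa using hint (-n) true
  rw [Lp.eq_zero_iff_ae_eq_zero]
  filter_upwards [hadd, hsub] with x hx hx'
  simp only [Pi.add_apply, Pi.zero_apply] at hx hx'
  have h0 : f x 0 = 0 := by linear_combination (hx + hx') / 2
  have h1 : f x 1 = 0 := by
    linear_combination (-Complex.I / 2) * (hx - hx') + f x 1 * Complex.I_sq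
  ext i
  fin_cases i
  · exact h0
  · exact h1

/-- The system `{ (1/√(2π))(1,−i)ᵀ e^{2inx}, (1/√(2π))(1,i)ᵀ e^{−2inx} : n ∈ ℤ }`
(eigenfunctions of the free Dirac operator with periodic boundary conditions)
is an orthonormal basis of `L²([0,π], ℂ²)`. Index `(n, false)` corresponds to
the first family and `(n, true)` to the second. -/
theorem stmt6 :
    ∃ b : HilbertBasis (ℤ × Bool) ℂ
        (Lp (EuclideanSpace ℂ (Fin 2)) 2 (volume.restrict (Set.Icc (0:ℝ) Real.pi))),
      ∀ n : ℤ, ∀ j : Bool,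
        (b (n, j) : Lp (EuclideanSpace ℂ (Fin 2)) 2 (volume.restrict (Set.Icc (0:ℝ) Real.pi)))
          =ᵐ[volume.restrict (Set.Icc (0:ℝ) Real.pi)]
        fun x : ℝ =>
          ((Real.sqrt (2 * Real.pi) : ℂ))⁻¹ •
            (WithLp.equiv 2 (Fin 2 → ℂ)).symm
              ![Complex.exp ((if j then -1 else 1) * Complex.I * (2 * (n : ℂ)) * (x : ℂ)),
                (if j then Complex.I else -Complex.I) *
                  Complex.exp ((if j then -1 else 1) * Complex.I * (2 * (n : ℂ)) * (x : ℂ))] := by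
  refine ⟨HilbertBasis.mkOfOrthogonalEqBot orthonormal_diracMode orthogonal_span_diracMode_eq_bot,
    fun n j => ?_⟩
  rw [HilbertBasis.coe_mkOfOrthogonalEqBot]
  exact (memLp_diracMode n j).coeFn_toLp
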